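/- Fix an integer N ≥ −1 and scalars D_1, …, D_{N+1} ∈ K. With the modes and conventions of the context (Z₂-twisted bosons b_r, r ∈ ℤ+1/2, and Z₂-twisted Ramond fermions ψ_n, n ∈ ℤ, with zero mode ψ_0 = (1/√(2ℏ))(θ^0 + ℏ ∂_{θ^0})), define for each integer i ≥ 1: H_i = ℏ ∂_{x^i} + (ℏ/2) Σ_{r∈ℤ+1/2} :b_r b_{i+N−1−r}: + (ℏ/2) Σ_{j∈ℤ} (j + (i+N−1)/2) :ψ_{−j} ψ_{i+N−1+j}: + (ℏ/8) [i = 1−N] + ℏ D_i [i ≤ N+1], and for r ∈ ℤ_{≥0}+1/2: F_r = ℏ ∂_{θ^{r+1/2}} + ℏ Σ_{s∈ℤ+1/2} b_s ψ_{r+N−s}. Then these operators form a representation of a subalgebra of the N=1 super Virasoro algebra in the Neveu–Schwarz sector: for all integers i, j ≥ 1 and all r, s ∈ ℤ_{≥0}+1/2, [H_i, H_j] = ℏ (i−j) H_{i+j+N−1}, [H_i, F_r] = ℏ ((i−N−1)/2 − r) F_{i+r+N−1}, and {F_r, F_s} = 2ℏ H_{r+s+N+1}; in the middle relation, whenever the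 subscript i+r+N−1 lies outside the allowed index range the scalar coefficient vanishes, so the relation is read with right-hand side 0. (This is a super quantum Airy structure with one extra fermionic variable θ^0.) -/

import Mathlib

/-!
Statement 10: the ρ-twisted free boson–fermion representation of a subalgebra of the N=1
super Virasoro algebra in the Neveu–Schwarz sector. Z₂-twisted bosons `b_r`, `r ∈ ℤ+1/2`,
act on `P = K[t,t⁻¹][x¹,x²,…]` (with `ℏ = t²`, `√ℏ = t`), Z₂-twisted Ramond fermions
`ψ_n`, `n ∈ ℤ`, with zero mode `ψ₀ = (1/√(2ℏ))(θ⁰ + ℏ∂_{θ⁰})`, act on `Λ(θ⁰,θ¹,…)`.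
Half-integer indices `r = n + 1/2 ∈ ℤ + 1/2` are parametrised by `n ∈ ℤ`.
The resulting super quantum Airy structure has one extra fermionic variable `θ⁰`.
-/

set_option synthInstance.maxHeartbeats 1000000
set_option maxHeartbeats 1000000

noncomputable section
open TensorProduct

variable (K : Type) [Field K] [CharZero K] (s2 : K)

/-- `R = K[t,t⁻¹]`, with `ℏ = t²`, `√ℏ = t`. -/
abbrev R := LaurentPolynomial K
/-- `ℏ = t² ∈ R`. -/
def hb : R K := LaurentPolynomial.T 2
/-- A scalar `c : K` viewed in `R`. -/
def cs (c : K) : R K := LaurentPolynomial.C c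
/-- The even part `P = R[x¹,x²,x³,…]`; variables are indexed by `ℕ+`. -/
abbrev Pev := MvPolynomial ℕ+ (R K)
/-- The odd part `Λ(θ⁰,θ¹,…)`; generators are indexed by `ℕ`. -/
abbrev Podd := ExteriorAlgebra (R K) (ℕ →₀ R K)
/-- The full carrier `S = P ⊗_R Λ`. -/
abbrev SuperSpace := Pev K ⊗[R K] Podd K

/-- `∂_{x^a}`, acting through the polynomial factor. -/
def dX (a : ℕ+) : SuperSpace K → SuperSpace K :=
  LinearMap.rTensor (Podd K) (MvPolynomial.pderiv a).toLinearMap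

/-- Multiplication by `x^a`, acting through the polynomial factor. -/
def mX (a : ℕ+) : SuperSpace K → SuperSpace K :=
  LinearMap.rTensor (Podd K) (LinearMap.mulLeft (R K) (MvPolynomial.X a))

/-- `∂_{θ^a}` (interior product with the dual basis vector), acting through the odd factor. -/
def dT (a : ℕ) : SuperSpace K → SuperSpace K :=
  LinearMap.lTensor (Pev K) (CliffordAlgebra.contractLeft (Finsupp.lapply a))

/-- Left multiplication by `θ^a`, acting through the odd factor. -/
def mT (a : ℕ) : SuperSpace K → SuperSpace K :=
  LinearMap.lTensor (Pev K)
    (LinearMap.mulLeft (R K) (ExteriorAlgebra.ι (R K) (Finsupp.single a 1)))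

/-- `∂_{x^a}` for `a ∈ ℤ`, vanishing for `a < 1`. -/
def dXi (a : ℤ) : SuperSpace K → SuperSpace K :=
  fun v => if h : 1 ≤ a then dX K ⟨a.toNat, by omega⟩ v else 0

/-- `∂_{θ^a}` for `a ∈ ℤ`, vanishing for `a < 1` (used only for the linear terms of `F_r`). -/
def dTi (a : ℤ) : SuperSpace K → SuperSpace K :=
  fun v => if 1 ≤ a then dT K a.toNat v else 0

/-- The Z₂-twisted boson mode `b_{n+1/2}`: `b_r = √ℏ ∂_{x^{r+1/2}}` and
`b_{−r} = (r/√ℏ) x^{r+1/2}` for `r ∈ ℤ_{≥0}+1/2`. -/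
def bos (n : ℤ) : SuperSpace K → SuperSpace K :=
  if h : 0 ≤ n then fun v => (LaurentPolynomial.T 1 : R K) • dX K ⟨(n + 1).toNat, by omega⟩ v
  else fun v =>
    ((((-2 * n - 1 : ℤ) : R K) * cs K (2 : K)⁻¹) * LaurentPolynomial.T (-1)) •
      mX K ⟨(-n).toNat, by omega⟩ v

/-- The Z₂-twisted (Ramond) fermion mode `ψ_n`: `ψ_n = √ℏ ∂_{θ^n}` and
`ψ_{−n} = (1/√ℏ) θ^n` for `n ≥ 1`, and `ψ₀ = (1/√(2ℏ))(θ⁰ + ℏ∂_{θ⁰})`. -/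
def fer (n : ℤ) : SuperSpace K → SuperSpace K :=
  if 1 ≤ n then fun v => (LaurentPolynomial.T 1 : R K) • dT K n.toNat v
  else if n = 0 then fun v =>
    (cs K s2⁻¹ * LaurentPolynomial.T (-1)) • (mT K 0 v + hb K • dT K 0 v)
  else fun v => (LaurentPolynomial.T (-1) : R K) • mT K (-n).toNat v

/-- The normally ordered boson bilinear `:b_{n+1/2} b_{m+1/2}:`. -/
def nb (n m : ℤ) : SuperSpace K → SuperSpace K :=
  if n ≤ m then fun v => bos K n (bos K m v) else fun v => bos K m (bos K n v)

/-- The normally ordered fermion bilinear `:ψ_α ψ_β:`. -/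
def nf (α β : ℤ) : SuperSpace K → SuperSpace K :=
  if α ≤ β then fun v => fer K s2 α (fer K s2 β v)
  else fun v => -(fer K s2 β (fer K s2 α v))

/-- `H_i = ℏ ∂_{x^i} + (ℏ/2) Σ_{r∈ℤ+1/2} :b_r b_{i+N−1−r}:
        + (ℏ/2) Σ_{j∈ℤ} (j + (i+N−1)/2) :ψ_{−j} ψ_{i+N−1+j}:
        + (ℏ/8) [i = 1−N] + ℏ D_i [i ≤ N+1]`,
the half-integer boson sum being parametrised by `r = n + 1/2`, `n ∈ ℤ`. -/
def Hop (N : ℤ) (D : ℤ → K) (i : ℤ) : SuperSpace K → SuperSpace K := fun v =>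
  hb K • dXi K i v
    + (cs K (2 : K)⁻¹ * hb K) • (∑ᶠ n : ℤ, nb K n (i + N - 2 - n) v)
    + (cs K (2 : K)⁻¹ * hb K) •
        (∑ᶠ j : ℤ, (((2 * j + i + N - 1 : ℤ) : R K) * cs K (2 : K)⁻¹) •
          nf K s2 (-j) (i + N - 1 + j) v)
    + (if i = 1 - N then (cs K (8 : K)⁻¹ * hb K) • v else 0)
    + (if i ≤ N + 1 then (hb K * cs K (D i)) • v else 0)

/-- `F_{n+1/2} = ℏ ∂_{θ^{n+1/2+1/2}} + ℏ Σ_{s∈ℤ+1/2} b_s ψ_{n+1/2+N−s}`, the half-integer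
sum being parametrised by `s = m + 1/2`, `m ∈ ℤ`. -/
def Fop (N : ℤ) (n : ℤ) : SuperSpace K → SuperSpace K := fun v =>
  hb K • dTi K (n + 1) v + hb K • (∑ᶠ m : ℤ, bos K m (fer K s2 (n + N - m) v))

/-!
The modes of the free boson and the free fermion generate, through normally ordered quadratic
expressions, a full `N = 1` super Virasoro algebra: operators `L_m`, `G_r` of central charge `3/2`.
A bracket of `L_m` or `G_r` with a single mode is a multiple of a single mode. As `G_s` is a sum of
products of modes, the Leibniz rule then yields `[L_m, G_s]`, and also `{G_r, G_s}`, where restoring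
normal order produces the central term. The remaining bracket `[L_m, L_n]` is not computed from
normally ordered products: `2 L_n = {G_{-1/2}, G_{n + 1/2}}` reduces it to the previous ones through
the Jacobi identity. The central terms vanish on the span of the `L_m` with `m ≥ -1` and the `G_r`
with `r ≥ -1/2`. Finally `H_i` and `F_r` are multiples of `L_{i + N - 1}` and `G_{r + N}` plus a
multiple of a single mode and, for `H_i`, a scalar, so the relations between them follow from those
between `L`, `G` and the modes.
-/

open Filter

attribute [local instance] LieRing.ofAssociativeRing

section Anticommutator

variable {S : Type*} [Ring S]

/-- The anticommutator `{x, y} = x y + y x`, i.e. the supercommutator of two odd operators. -/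
def anticomm (x y : S) : S := x * y + y * x

lemma anticomm_comm (x y : S) : anticomm x y = anticomm y x := add_comm _ _

lemma one_lie (x : S) : ⁅(1 : S), x⁆ = 0 := (Commute.one_left x).lie_eq

lemma lie_one (x : S) : ⁅x, (1 : S)⁆ = 0 := (Commute.one_right x).lie_eq

lemma mul_add_lie_mul (x y z : S) : ⁅x * y, z⁆ = x * ⁅y, z⁆ + ⁅x, z⁆ * y := by
  simp only [Ring.lie_def]; noncomm_ring

lemma lie_mul_add_mul_lie (x y z : S) : ⁅x, y * z⁆ = ⁅x, y⁆ * z + y * ⁅x, z⁆ := by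
  simp only [Ring.lie_def]; noncomm_ring

lemma mul_lie_eq_mul_anticomm_sub (x y z : S) :
    ⁅x * y, z⁆ = x * anticomm y z - anticomm x z * y := by
  simp only [Ring.lie_def, anticomm]; noncomm_ring

lemma anticomm_mul (x y z : S) : anticomm x (y * z) = ⁅x, y⁆ * z + y * anticomm x z := by
  simp only [Ring.lie_def, anticomm]; noncomm_ring

lemma lie_anticomm (x y z : S) : ⁅x, anticomm y z⁆ = anticomm ⁅x, y⁆ z + anticomm y ⁅x, z⁆ := by
  simp only [Ring.lie_def, anticomm]; noncomm_ring

lemma smul_anticomm {A : Type*} [CommRing A] [Algebra A S] (c : A) (x y : S) :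
    anticomm (c • x) y = c • anticomm x y := by
  rw [anticomm, smul_mul_assoc, mul_smul_comm, ← smul_add, anticomm]

lemma anticomm_smul {A : Type*} [CommRing A] [Algebra A S] (c : A) (x y : S) :
    anticomm x (c • y) = c • anticomm x y := by
  rw [anticomm_comm, smul_anticomm, anticomm_comm]

lemma anticomm_add (x y z : S) : anticomm x (y + z) = anticomm x y + anticomm x z := by
  simp only [anticomm, mul_add, add_mul]; abel

lemma add_anticomm (x y z : S) : anticomm (x + y) z = anticomm x z + anticomm y z := by
  rw [anticomm_comm, anticomm_add, anticomm_comm x, anticomm_comm y]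

lemma map_ring_lie {S' F : Type*} [Ring S'] [FunLike F S S'] [RingHomClass F S S'] (f : F)
    (x y : S) : f ⁅x, y⁆ = ⁅f x, f y⁆ := by
  rw [Ring.lie_def, map_sub, map_mul, map_mul, Ring.lie_def]

lemma map_anticomm {S' F : Type*} [Ring S'] [FunLike F S S'] [RingHomClass F S S'] (f : F)
    (x y : S) : f (anticomm x y) = anticomm (f x) (f y) := by
  rw [anticomm, map_add, map_mul, map_mul, anticomm]

end Anticommutator

section LocallyFinite

variable {ι A V : Type*} [CommRing A] [AddCommGroup V] [Module A V]

/-- A family of operators is locally finite if only finitely many of its members act nontrivially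
on any given vector. -/
def IsLocallyFinite (g : ι → Module.End A V) : Prop :=
  ∀ v, (Function.support fun n => g n v).Finite

/-- `T` is the pointwise sum of the locally finite family `g`; this plays the role of `HasSum` for
infinite sums of operators. -/
def HasPointwiseSum (g : ι → Module.End A V) (T : Module.End A V) : Prop :=
  IsLocallyFinite g ∧ ∀ v, ∑ᶠ n, g n v = T v

namespace IsLocallyFinite

variable {g : ι → Module.End A V}

/-- The sum of a locally finite family of operators. -/
def sum (hg : IsLocallyFinite g) : Module.End A V where
  toFun v := ∑ᶠ n, g n v
  map_add' v w := by
    simp only [map_add]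
    exact finsum_add_distrib (hg v) (hg w)
  map_smul' c v := by
    simp only [map_smul, RingHom.id_apply]
    exact (smul_finsum' c (hg v)).symm

lemma hasPointwiseSum (hg : IsLocallyFinite g) : HasPointwiseSum g hg.sum :=
  ⟨hg, fun _ => rfl⟩

lemma smul (hg : IsLocallyFinite g) (c : ι → A) : IsLocallyFinite fun n => c n • g n := fun v =>
  (hg v).subset fun n hn h0 => hn (by simp only [LinearMap.smul_apply, h0, smul_zero])

lemma of_eventually_max {g : ℤ → Module.End A V} (c : ℤ)
    (h : ∀ v, ∀ᶠ k in atTop, ∀ n, max n (c - n) = k → g n v = 0) : IsLocallyFinite g := by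
  intro v
  obtain ⟨B, hB⟩ := eventually_atTop.1 (h v)
  refine (Set.finite_Ioo (c - B) B).subset fun n hn => ?_
  have hlt : max n (c - n) < B := not_le.1 fun hle => hn (hB _ hle n rfl)
  exact ⟨by linarith [le_max_right n (c - n)], (le_max_left _ _).trans_lt hlt⟩

end IsLocallyFinite

namespace HasPointwiseSum

variable {g g' : ι → Module.End A V} {T T' : Module.End A V}

lemma eq_of_forall_eq (h : HasPointwiseSum g T) (h' : HasPointwiseSum g' T')
    (hg : ∀ n, g n = g' n) : T = T' := by
  obtain rfl : g = g' := funext hg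
  exact LinearMap.ext fun v => (h.2 v).symm.trans (h'.2 v)

lemma add (h : HasPointwiseSum g T) (h' : HasPointwiseSum g' T') :
    HasPointwiseSum (fun n => g n + g' n) (T + T') :=
  ⟨fun v => ((h.1 v).union (h'.1 v)).subset (Function.support_add _ _), fun v =>
    (finsum_add_distrib (h.1 v) (h'.1 v)).trans (congrArg₂ _ (h.2 v) (h'.2 v))⟩

lemma mul_left (h : HasPointwiseSum g T) (x : Module.End A V) :
    HasPointwiseSum (fun n => x * g n) (x * T) :=
  ⟨fun v => (h.1 v).subset fun _ hn h0 => hn ((congrArg x h0).trans (map_zero x)), fun v =>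
    (x.toAddMonoidHom.map_finsum (h.1 v)).symm.trans (congrArg x (h.2 v))⟩

lemma mul_right (h : HasPointwiseSum g T) (x : Module.End A V) :
    HasPointwiseSum (fun n => g n * x) (T * x) :=
  ⟨fun v => h.1 (x v), fun v => h.2 (x v)⟩

lemma smul (h : HasPointwiseSum g T) (c : A) : HasPointwiseSum (fun n => c • g n) (c • T) := by
  simpa only [smul_one_mul] using h.mul_left (c • 1)

lemma sub (h : HasPointwiseSum g T) (h' : HasPointwiseSum g' T') :
    HasPointwiseSum (fun n => g n - g' n) (T - T') := by
  simpa only [sub_eq_add_neg, neg_smul, one_smul] using h.add (h'.smul (-1))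

lemma lie_left (h : HasPointwiseSum g T) (x : Module.End A V) :
    HasPointwiseSum (fun n => ⁅x, g n⁆) ⁅x, T⁆ :=
  (h.mul_left x).sub (h.mul_right x)

lemma lie_right (h : HasPointwiseSum g T) (x : Module.End A V) :
    HasPointwiseSum (fun n => ⁅g n, x⁆) ⁅T, x⁆ :=
  (h.mul_right x).sub (h.mul_left x)

lemma anticomm_left (h : HasPointwiseSum g T) (x : Module.End A V) :
    HasPointwiseSum (fun n => anticomm x (g n)) (anticomm x T) :=
  (h.mul_left x).add (h.mul_right x)

lemma commute (h : HasPointwiseSum g T) {x : Module.End A V} (hx : ∀ n, Commute (g n) x) :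
    Commute T x :=
  (h.mul_right x).eq_of_forall_eq (h.mul_left x) hx

lemma comp_equiv {κ : Type*} (h : HasPointwiseSum g T) (e : κ ≃ ι) :
    HasPointwiseSum (fun k => g (e k)) T :=
  ⟨fun v => (h.1 v).preimage e.injective.injOn, fun v =>
    (finsum_comp_equiv e).trans (h.2 v)⟩

lemma of_forall_ne (c : ι) (h : ∀ n, n ≠ c → g n = 0) : HasPointwiseSum g (g c) := by
  have hv (v : V) (n : ι) (hn : n ≠ c) : g n v = 0 := by rw [h n hn, LinearMap.zero_apply]
  exact ⟨fun v => (Set.finite_singleton c).subset fun n hn => not_not.1 fun hc => hn (hv v n hc),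
    fun v => finsum_eq_single _ c (hv v)⟩

lemma ite_eq [DecidableEq ι] (c : ι) (x : ι → Module.End A V) :
    HasPointwiseSum (fun n => if n = c then x n else 0) (x c) := by
  simpa only [if_true] using
    of_forall_ne (g := fun n => if n = c then x n else 0) c fun n hn => if_neg hn

lemma succ_sub_self {f : ℤ → Module.End A V} (hf : IsLocallyFinite f) :
    HasPointwiseSum (fun n => f (n + 1) - f n) 0 := by
  simpa only [Equiv.coe_addRight, sub_self] using
    (hf.hasPointwiseSum.comp_equiv (Equiv.addRight 1)).sub hf.hasPointwiseSum

end HasPointwiseSum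

end LocallyFinite

/-- Modes of a `ℤ₂`-twisted free boson and of a Ramond free fermion: `b n` stands for the
half-integral mode `b_{n + 1/2}` and `ψ n` for `ψ_n`. Annihilation of every vector by all high modes
makes the quadratic expressions in the modes well defined. -/
structure TwistedModes (A V : Type*) [CommRing A] [Invertible (2 : A)] [AddCommGroup V]
    [Module A V] where
  b : ℤ → Module.End A V
  ψ : ℤ → Module.End A V
  lie_b_b : ∀ n m, ⁅b n, b m⁆ = if n + m + 1 = 0 then (((2 * n + 1 : ℤ) : A) * ⅟2) • 1 else 0
  anticomm_ψ_ψ : ∀ n m, anticomm (ψ n) (ψ m) = if n + m = 0 then 1 else 0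
  commute_b_ψ : ∀ n m, Commute (b n) (ψ m)
  b_eventually_eq_zero : ∀ v, ∀ᶠ n in atTop, b n v = 0
  ψ_eventually_eq_zero : ∀ v, ∀ᶠ n in atTop, ψ n v = 0

namespace TwistedModes

variable {A V : Type*} [CommRing A] [Invertible (2 : A)] [AddCommGroup V] [Module A V]
  (M : TwistedModes A V)

/-- The normally ordered product `:b_{n + 1/2} b_{m + 1/2}:`. -/
def normalB (n m : ℤ) : Module.End A V := if n ≤ m then M.b n * M.b m else M.b m * M.b n

/-- The normally ordered product `:ψ_n ψ_m:`. -/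
def normalΨ (n m : ℤ) : Module.End A V := if n ≤ m then M.ψ n * M.ψ m else -(M.ψ m * M.ψ n)

lemma b_mul_b (n m : ℤ) : M.b n * M.b m = M.normalB n m +
    (if n + m + 1 = 0 ∧ m < n then ((2 * n + 1 : ℤ) : A) * ⅟2 else 0) • 1 := by
  have comm : M.b n * M.b m = M.b m * M.b n + ⁅M.b n, M.b m⁆ := by rw [Ring.lie_def]; abel
  rcases le_or_gt n m with h | h
  · simp only [normalB, if_pos h, h.not_gt, and_false, if_false, zero_smul, add_zero]
  · simp only [normalB, if_neg h.not_ge, h, and_true, ite_smul, zero_smul, comm, lie_b_b]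

lemma ψ_mul_ψ (n m : ℤ) : M.ψ n * M.ψ m = M.normalΨ n m +
    (if n + m = 0 ∧ m < n then 1 else 0 : A) • 1 := by
  have comm : M.ψ n * M.ψ m = -(M.ψ m * M.ψ n) + anticomm (M.ψ n) (M.ψ m) := by
    rw [anticomm]; abel
  rcases le_or_gt n m with h | h
  · simp only [normalΨ, if_pos h, h.not_gt, and_false, if_false, zero_smul, add_zero]
  · simp only [normalΨ, if_neg h.not_ge, h, and_true, ite_smul, one_smul, zero_smul, comm,
      anticomm_ψ_ψ]

lemma lie_normalB (n m : ℤ) (x : Module.End A V) : ⁅M.normalB n m, x⁆ = ⁅M.b n * M.b m, x⁆ := by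
  rw [b_mul_b, add_lie, smul_lie, one_lie, smul_zero, add_zero]

lemma lie_normalΨ (n m : ℤ) (x : Module.End A V) : ⁅M.normalΨ n m, x⁆ = ⁅M.ψ n * M.ψ m, x⁆ := by
  rw [ψ_mul_ψ, add_lie, smul_lie, one_lie, smul_zero, add_zero]

lemma normalΨ_add_swap (n m : ℤ) :
    M.normalΨ n m + M.normalΨ m n = if n = 0 ∧ m = 0 then 1 else 0 := by
  rcases lt_trichotomy n m with h | rfl | h
  · rw [normalΨ, normalΨ, if_pos h.le, if_neg h.not_ge, if_neg (by lia), add_neg_cancel]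
  · rw [normalΨ, if_pos le_rfl, ← anticomm, anticomm_ψ_ψ]
    exact if_congr (by lia) rfl rfl
  · rw [normalΨ, normalΨ, if_neg h.not_ge, if_pos h.le, if_neg (by lia), neg_add_cancel]

lemma isLocallyFinite_normalB (c : ℤ) : IsLocallyFinite fun n => M.normalB n (c - n) := by
  refine .of_eventually_max c fun v => (M.b_eventually_eq_zero v).mono ?_
  rintro k hk n rfl
  rcases le_or_gt n (c - n) with h | h
  · rw [max_eq_right h] at hk
    rw [normalB, if_pos h, Module.End.mul_apply, hk, map_zero]
  · rw [max_eq_left h.le] at hk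
    rw [normalB, if_neg h.not_ge, Module.End.mul_apply, hk, map_zero]

lemma isLocallyFinite_normalΨ (c : ℤ) : IsLocallyFinite fun n => M.normalΨ n (c - n) := by
  refine .of_eventually_max c fun v => (M.ψ_eventually_eq_zero v).mono ?_
  rintro k hk n rfl
  rcases le_or_gt n (c - n) with h | h
  · rw [max_eq_right h] at hk
    rw [normalΨ, if_pos h, Module.End.mul_apply, hk, map_zero]
  · rw [max_eq_left h.le] at hk
    rw [normalΨ, if_neg h.not_ge, LinearMap.neg_apply, Module.End.mul_apply, hk, map_zero,
      neg_zero]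

lemma isLocallyFinite_b_mul_ψ (c : ℤ) : IsLocallyFinite fun n => M.b n * M.ψ (c - n) := by
  refine .of_eventually_max c fun v => ?_
  filter_upwards [M.b_eventually_eq_zero v, M.ψ_eventually_eq_zero v]
  rintro k hb hψ n rfl
  rcases le_or_gt n (c - n) with h | h
  · rw [max_eq_right h] at hψ
    rw [Module.End.mul_apply, hψ, map_zero]
  · rw [max_eq_left h.le] at hb
    rw [(M.commute_b_ψ _ _).eq, Module.End.mul_apply, hb, map_zero]

/-- Twice the bosonic part of the Virasoro operator `L m`, without its normal-ordering constant. -/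
def LB (m : ℤ) : Module.End A V := (M.isLocallyFinite_normalB (m - 1)).sum

/-- Twice the fermionic part of the Virasoro operator `L m`, without its normal-ordering
constant. -/
def LF (m : ℤ) : Module.End A V :=
  ((M.isLocallyFinite_normalΨ m).smul fun n => ((m - 2 * n : ℤ) : A) * ⅟2).sum

/-- The Virasoro operator `L_m` of the boson–fermion system. The constant in `L_0` is the
conformal weight `1/16 + 1/16` of the twisted vacuum. -/
def L (m : ℤ) : Module.End A V :=
  (⅟2 : A) • M.LB m + (⅟2 : A) • M.LF m + (if m = 0 then ⅟2 ^ 3 else 0 : A) • 1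

/-- The supercurrent mode `G_{a + 1/2}` of the boson–fermion system. -/
def G (a : ℤ) : Module.End A V := (M.isLocallyFinite_b_mul_ψ a).sum

lemma hasPointwiseSum_LB (m : ℤ) :
    HasPointwiseSum (fun n => M.normalB n (m - 1 - n)) (M.LB m) :=
  (M.isLocallyFinite_normalB (m - 1)).hasPointwiseSum

lemma hasPointwiseSum_LF (m : ℤ) :
    HasPointwiseSum (fun n => (((m - 2 * n : ℤ) : A) * ⅟2) • M.normalΨ n (m - n)) (M.LF m) :=
  ((M.isLocallyFinite_normalΨ m).smul _).hasPointwiseSum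

lemma hasPointwiseSum_G (a : ℤ) : HasPointwiseSum (fun n => M.b n * M.ψ (a - n)) (M.G a) :=
  (M.isLocallyFinite_b_mul_ψ a).hasPointwiseSum

lemma lie_L (m : ℤ) (x : Module.End A V) :
    ⁅M.L m, x⁆ = (⅟2 : A) • ⁅M.LB m, x⁆ + (⅟2 : A) • ⁅M.LF m, x⁆ := by
  rw [L, add_lie, add_lie, smul_lie, smul_lie, smul_lie, one_lie, smul_zero,
    add_zero]

lemma lie_LB_b (m r : ℤ) : ⁅M.LB m, M.b r⁆ = -((2 * r + 1 : ℤ) : A) • M.b (m + r) := by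
  have terms := (HasPointwiseSum.ite_eq (m + r) fun n =>
      (((2 * (m - 1 - n) + 1 : ℤ) : A) * ⅟2) • M.b n).add
    (HasPointwiseSum.ite_eq (-r - 1) fun n => (((2 * n + 1 : ℤ) : A) * ⅟2) • M.b (m - 1 - n))
  have sum := ((M.hasPointwiseSum_LB m).lie_right (M.b r)).eq_of_forall_eq terms fun n => by
    simp only [lie_normalB, mul_add_lie_mul, lie_b_b, mul_ite, ite_mul, mul_zero, zero_mul,
      mul_smul_comm, smul_mul_assoc, mul_one, one_mul]
    congr 1 <;> exact if_congr (by lia) rfl rfl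
  rw [sum, show m - 1 - (-r - 1) = m + r by ring, ← add_smul]
  congr 1
  push_cast
  linear_combination (-2 * (r : A) - 1) * mul_invOf_self (2 : A)

lemma commute_LB_ψ (m r : ℤ) : Commute (M.LB m) (M.ψ r) :=
  (M.hasPointwiseSum_LB m).commute fun n => by
    unfold normalB
    split_ifs
    · exact (M.commute_b_ψ _ _).mul_left (M.commute_b_ψ _ _)
    · exact (M.commute_b_ψ _ _).mul_left (M.commute_b_ψ _ _)

lemma commute_LF_b (m r : ℤ) : Commute (M.LF m) (M.b r) :=
  (M.hasPointwiseSum_LF m).commute fun n => by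
    refine .smul_left ?_ _
    unfold normalΨ
    split_ifs
    · exact (M.commute_b_ψ _ _).symm.mul_left (M.commute_b_ψ _ _).symm
    · exact ((M.commute_b_ψ _ _).symm.mul_left (M.commute_b_ψ _ _).symm).neg_left

lemma lie_LF_ψ (m r : ℤ) : ⁅M.LF m, M.ψ r⁆ = -((2 * r + m : ℤ) : A) • M.ψ (m + r) := by
  have terms := (HasPointwiseSum.ite_eq (m + r) fun n =>
      (((m - 2 * n : ℤ) : A) * ⅟2) • M.ψ n).sub
    (HasPointwiseSum.ite_eq (-r) fun n => (((m - 2 * n : ℤ) : A) * ⅟2) • M.ψ (m - n))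
  have sum := ((M.hasPointwiseSum_LF m).lie_right (M.ψ r)).eq_of_forall_eq terms fun n => by
    simp only [smul_lie, lie_normalΨ, mul_lie_eq_mul_anticomm_sub, anticomm_ψ_ψ, mul_ite, ite_mul,
      mul_zero, zero_mul, mul_one, one_mul, smul_sub, smul_ite, smul_zero]
    congr 1 <;> exact if_congr (by lia) rfl rfl
  rw [sum, show m - -r = m + r by ring, ← sub_smul]
  congr 1
  push_cast
  linear_combination (-2 * (r : A) - m) * mul_invOf_self (2 : A)

lemma lie_L_b (m r : ℤ) : ⁅M.L m, M.b r⁆ = -(((2 * r + 1 : ℤ) : A) * ⅟2) • M.b (m + r) := by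
  rw [lie_L, lie_LB_b, (M.commute_LF_b m r).lie_eq]
  module

lemma lie_L_ψ (m r : ℤ) : ⁅M.L m, M.ψ r⁆ = -(((2 * r + m : ℤ) : A) * ⅟2) • M.ψ (m + r) := by
  rw [lie_L, lie_LF_ψ, (M.commute_LB_ψ m r).lie_eq]
  module

lemma lie_G_b (a m : ℤ) : ⁅M.G a, M.b m⁆ = -(((2 * m + 1 : ℤ) : A) * ⅟2) • M.ψ (a + m + 1) := by
  have terms := HasPointwiseSum.ite_eq (-m - 1) fun n =>
    (((2 * n + 1 : ℤ) : A) * ⅟2) • M.ψ (a - n)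
  have sum := ((M.hasPointwiseSum_G a).lie_right (M.b m)).eq_of_forall_eq terms fun n => by
    simp only [mul_add_lie_mul, (M.commute_b_ψ m (a - n)).symm.lie_eq, lie_b_b, mul_zero, zero_add,
      ite_mul, smul_one_mul, zero_mul]
    exact if_congr (by lia) rfl rfl
  rw [sum, show a - (-m - 1) = a + m + 1 by ring]
  congr 1
  push_cast
  ring

lemma anticomm_G_ψ (a m : ℤ) : anticomm (M.G a) (M.ψ m) = M.b (a + m) := by
  rw [anticomm_comm]
  refine ((M.hasPointwiseSum_G a).anticomm_left (M.ψ m)).eq_of_forall_eq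
    (HasPointwiseSum.ite_eq (a + m) M.b) fun n => ?_
  rw [anticomm_mul, (M.commute_b_ψ n m).symm.lie_eq, zero_mul, zero_add, anticomm_ψ_ψ, mul_ite,
    mul_one, mul_zero]
  exact if_congr (by lia) rfl rfl

lemma lie_L_G (m a : ℤ) : ⁅M.L m, M.G a⁆ = (((m - 2 * a - 1 : ℤ) : A) * ⅟2) • M.G (m + a) := by
  have shifted := ((M.isLocallyFinite_b_mul_ψ (m + a)).smul fun n =>
    -(((2 * (n - m) + 1 : ℤ) : A) * ⅟2)).hasPointwiseSum
  have unshifted := ((M.isLocallyFinite_b_mul_ψ (m + a)).smul fun n =>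
    -(((2 * (a - n) + m : ℤ) : A) * ⅟2)).hasPointwiseSum
  have lie_sum := ((M.hasPointwiseSum_G a).lie_left (M.L m)).eq_of_forall_eq
    ((shifted.comp_equiv (Equiv.addLeft m)).add unshifted) fun n => by
      rw [lie_mul_add_mul_lie, lie_L_b, lie_L_ψ, smul_mul_assoc, mul_smul_comm,
        Equiv.coe_addLeft]
      dsimp only
      rw [add_sub_cancel_left, add_sub_add_left_eq_sub, add_sub_assoc]
  rw [lie_sum]
  refine (shifted.add unshifted).eq_of_forall_eq ((M.hasPointwiseSum_G (m + a)).smul _) fun n => ?_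
  rw [← add_smul]
  congr 1
  push_cast
  ring

lemma hasPointwiseSum_normalΨ (m : ℤ) :
    HasPointwiseSum (fun n => M.normalΨ n (m - n)) ((if m = 0 then ⅟2 else 0 : A) • 1) := by
  have hsum := (M.isLocallyFinite_normalΨ m).hasPointwiseSum
  have hswap := hsum.comp_equiv (Equiv.subLeft m)
  have double := (hsum.add hswap).eq_of_forall_eq
    (HasPointwiseSum.ite_eq 0 fun _ => if m = 0 then 1 else 0) fun n => by
      rw [Equiv.subLeft_apply, sub_sub_cancel, normalΨ_add_swap, ← ite_and]
      exact if_congr (by lia) rfl rfl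
  have half : (M.isLocallyFinite_normalΨ m).sum = (if m = 0 then ⅟2 else 0 : A) • 1 := by
    rw [← two_smul A, smul_eq_iff_eq_invOf_smul] at double
    rw [double, smul_ite, smul_zero, ite_smul, zero_smul]
  exact half ▸ hsum

/-- The scalar part of `{G_a, b_n ψ_{c - n}}` for `a + c + 1 = 0`, produced by normal ordering its
bosonic and its fermionic half. -/
def anomaly (A : Type*) [CommRing A] [Invertible (2 : A)] (a n : ℤ) : A :=
  (if 0 ≤ n then ((2 * n + 1 : ℤ) : A) * ⅟2 else 0) -
    if -a ≤ n then ((2 * n + 1 : ℤ) : A) * ⅟2 else 0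

-- `(2n + 1)/2` is the forward difference of `n²/2`, so the sum telescopes up to a boundary term.
lemma hasPointwiseSum_anomaly (a : ℤ) :
    HasPointwiseSum (fun n => anomaly A a n • (1 : Module.End A V))
      ((((a ^ 2 : ℤ) : A) * ⅟2) • 1) := by
  let f (n : ℤ) : A := (if 0 ≤ n then ((n ^ 2 : ℤ) : A) * ⅟2 else 0) -
    if -a ≤ n then ((n ^ 2 : ℤ) : A) * ⅟2 else 0
  have f_finite : IsLocallyFinite fun n => f n • (1 : Module.End A V) := fun v => by
    refine (Set.finite_Icc (min 0 (-a)) (max 0 (-a))).subset fun n hn => ?_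
    by_contra hout
    refine hn ?_
    rw [Set.mem_Icc] at hout
    have same : 0 ≤ n ↔ -a ≤ n := by lia
    simp only [f, same, sub_self, zero_smul, LinearMap.zero_apply]
  have boundary := HasPointwiseSum.ite_eq (-a - 1) fun _ =>
    (((a ^ 2 : ℤ) : A) * ⅟2) • (1 : Module.End A V)
  have telescoped := (HasPointwiseSum.succ_sub_self f_finite).add boundary
  rw [zero_add] at telescoped
  convert telescoped using 2 with n
  rw [← sub_smul, ← zero_smul A (1 : Module.End A V), ← ite_smul, ← add_smul]
  congr 1
  have split (c : ℤ) : (if c ≤ n + 1 then (((n + 1) ^ 2 : ℤ) : A) * ⅟2 else 0) =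
      (if c ≤ n then (((n + 1) ^ 2 : ℤ) : A) * ⅟2 else 0) +
        if n = c - 1 then ((c ^ 2 : ℤ) : A) * ⅟2 else 0 := by
    rcases lt_trichotomy n (c - 1) with h | rfl | h
    · rw [if_neg (by lia), if_neg (by lia), if_neg (by lia), add_zero]
    · rw [if_pos (by lia), if_neg (by lia), if_pos rfl, zero_add, sub_add_cancel]
    · rw [if_pos (by lia), if_pos (by lia), if_neg (by lia), add_zero]
  simp only [f, anomaly, split, neg_sq]
  split_ifs <;> push_cast <;> ring

lemma anticomm_G_b_mul_ψ (a c n : ℤ) : anticomm (M.G a) (M.b n * M.ψ (c - n)) =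
    M.normalB n (a + c - n) - (((2 * n + 1 : ℤ) : A) * ⅟2) • M.normalΨ (a + 1 + n) (c - n) +
      (if a + c + 1 = 0 then anomaly A a n else 0) • 1 := by
  rw [anticomm_mul, lie_G_b, anticomm_G_ψ, smul_mul_assoc, ψ_mul_ψ, b_mul_b,
    show a + n + 1 = a + 1 + n by ring, show a + (c - n) = a + c - n by ring, anomaly]
  by_cases h : a + c + 1 = 0
  · have hb : n + (a + c - n) + 1 = 0 ∧ a + c - n < n ↔ 0 ≤ n := by lia
    have hψ : a + 1 + n + (c - n) = 0 ∧ c - n < a + 1 + n ↔ -a ≤ n := by lia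
    simp only [hb, hψ, if_pos h]
    split_ifs <;> module
  · rw [if_neg (by lia), if_neg (by lia), if_neg h]
    module

lemma two_smul_L (m : ℤ) :
    (2 : A) • M.L m = M.LB m + M.LF m + (if m = 0 then ⅟2 ^ 2 else 0 : A) • 1 := by
  have cube : (2 : A) * ⅟2 ^ 3 = ⅟2 ^ 2 := by
    rw [pow_succ', ← mul_assoc, mul_invOf_self, one_mul]
  rw [L, smul_add, smul_add, smul_smul, smul_smul, smul_smul, mul_invOf_self, one_smul, one_smul,
    mul_ite, mul_zero, cube]

lemma anticomm_G_G (a c : ℤ) : anticomm (M.G a) (M.G c) = (2 : A) • M.L (a + c + 1) +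
    (if a + c + 1 = 0 then ((a * (a + 1) : ℤ) : A) * ⅟2 else 0) • 1 := by
  set m := a + c + 1
  have fermions := (M.hasPointwiseSum_LF m).add
    ((M.hasPointwiseSum_normalΨ m).smul (((2 * a + 1 - m : ℤ) : A) * ⅟2))
  have constants : HasPointwiseSum
      (fun n => (if m = 0 then anomaly A a n else 0) • (1 : Module.End A V))
      ((if m = 0 then ((a ^ 2 : ℤ) : A) * ⅟2 else 0) • 1) := by
    simpa only [smul_assoc, ite_smul, one_smul, zero_smul] using
      (hasPointwiseSum_anomaly (V := V) a).smul (if m = 0 then 1 else 0 : A)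
  have sum := ((M.hasPointwiseSum_G c).anticomm_left (M.G a)).eq_of_forall_eq
    (((M.hasPointwiseSum_LB m).add (fermions.comp_equiv (Equiv.addLeft (a + 1)))).add constants)
    fun n => by
      rw [anticomm_G_b_mul_ψ, Equiv.coe_addLeft, show m - 1 - n = a + c - n by lia,
        show m - (a + 1 + n) = c - n by lia, ← add_smul, sub_eq_add_neg, ← neg_smul]
      congr 3
      push_cast
      ring
  rw [sum, two_smul_L]
  split_ifs with h
  · rw [h]
    push_cast
    linear_combination (norm := module)
      ((⅟2 * a : A) • mul_invOf_self (2 : A)) • (1 : Module.End A V)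
  · module

lemma lie_L_L (m n : ℤ) : ⁅M.L m, M.L n⁆ = ((m - n : ℤ) : A) • M.L (m + n) +
    (if m + n = 0 then ((m ^ 3 - m : ℤ) : A) * ⅟2 ^ 3 else 0) • 1 := by
  have two_L : (2 : A) • M.L n = anticomm (M.G (-1)) (M.G n) := by
    simp [anticomm_G_G]
  have jacobi : (2 : A) • ⁅M.L m, M.L n⁆ =
      (((m + 1 : ℤ) : A) * ⅟2) • anticomm (M.G (m - 1)) (M.G n) +
        (((m - 2 * n - 1 : ℤ) : A) * ⅟2) • anticomm (M.G (-1)) (M.G (m + n)) := by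
    rw [← lie_smul, two_L, lie_anticomm, lie_L_G, lie_L_G, smul_anticomm, anticomm_smul,
      show m - 2 * -1 - 1 = m + 1 by ring, ← sub_eq_add_neg]
  rw [smul_eq_iff_eq_invOf_smul] at jacobi
  rw [jacobi, anticomm_G_G, anticomm_G_G, show m - 1 + n + 1 = m + n by ring,
    show -1 + (m + n) + 1 = m + n by ring]
  have half := mul_invOf_self (2 : A)
  split_ifs <;> push_cast
  · linear_combination (norm := module) (((m - n) * (⅟(2 : A) * 2 + 1)) • half) • M.L (m + n)
  · linear_combination (norm := module) (((m - n) * (⅟(2 : A) * 2 + 1)) • half) • M.L (m + n)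

lemma anticomm_G_G_of_neg_one_le {a c : ℤ} (ha : -1 ≤ a) (hc : -1 ≤ c) :
    anticomm (M.G a) (M.G c) = (2 : A) • M.L (a + c + 1) := by
  have central : (if a + c + 1 = 0 then ((a * (a + 1) : ℤ) : A) * ⅟2 else 0) = 0 := by
    split_ifs with h
    · obtain rfl | rfl : a = -1 ∨ a = 0 := by lia
      all_goals norm_num
    · rfl
  rw [anticomm_G_G, central, zero_smul, add_zero]

lemma lie_L_L_of_neg_one_le {m n : ℤ} (hm : -1 ≤ m) (hn : -1 ≤ n) :
    ⁅M.L m, M.L n⁆ = ((m - n : ℤ) : A) • M.L (m + n) := by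
  have central : (if m + n = 0 then ((m ^ 3 - m : ℤ) : A) * ⅟2 ^ 3 else 0) = 0 := by
    split_ifs with h
    · obtain rfl | rfl | rfl : m = -1 ∨ m = 0 ∨ m = 1 := by lia
      all_goals norm_num
    · rfl
  rw [lie_L_L, central, zero_smul, add_zero]

/-- The operator `H_i` for `1 ≤ i`, with `t` in place of `√ℏ`. The term `ℏ ∂/∂x^i` of `H_i` is
written as a multiple of the mode `b_{i - 1/2}`. -/
def H (t : A) (N : ℤ) (d : ℤ → A) (i : ℤ) : Module.End A V :=
  t • M.b (i - 1) + t ^ 2 • M.L (i + N - 1) + (if i ≤ N + 1 then t ^ 2 * d i else 0) • 1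

/-- The operator `F_{n + 1/2}` for `0 ≤ n`, with `t` in place of `√ℏ`. The term `ℏ ∂/∂θ^{n + 1}` of
`F_{n + 1/2}` is written as a multiple of the mode `ψ_{n + 1}`. -/
def F (t : A) (N n : ℤ) : Module.End A V := t • M.ψ (n + 1) + t ^ 2 • M.G (n + N)

lemma lie_H_H (t : A) {N : ℤ} (hN : -1 ≤ N) (d : ℤ → A) {i j : ℤ} (hi : 1 ≤ i) (hj : 1 ≤ j) :
    ⁅M.H t N d i, M.H t N d j⁆ = (t ^ 2 * ((i - j : ℤ) : A)) • M.H t N d (i + j + N - 1) := by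
  rcases eq_or_ne i j with rfl | hij
  · rw [lie_self, sub_self, Int.cast_zero, mul_zero, zero_smul]
  have hbb := M.lie_b_b (i - 1) (j - 1)
  have hLb := M.lie_L_b (i + N - 1) (j - 1)
  have hbL := M.lie_L_b (j + N - 1) (i - 1)
  have hLL := M.lie_L_L_of_neg_one_le (show -1 ≤ i + N - 1 by lia) (show -1 ≤ j + N - 1 by lia)
  rw [if_neg (by lia)] at hbb
  rw [show i + N - 1 + (j - 1) = i + j + N - 1 - 1 by ring] at hLb
  rw [show j + N - 1 + (i - 1) = i + j + N - 1 - 1 by ring, ← lie_skew] at hbL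
  rw [show i + N - 1 + (j + N - 1) = i + j + N - 1 + N - 1 by ring] at hLL
  simp only [H, add_lie, lie_add, smul_lie, lie_smul, one_lie, lie_one]
  rw [if_neg (show ¬i + j + N - 1 ≤ N + 1 by lia)]
  push_cast at hLb hbL hLL ⊢
  linear_combination (norm := module) t ^ 2 • hbb + t ^ 3 • hLb - t ^ 3 • hbL + t ^ 4 • hLL +
    (t ^ 3 * (i - j : A)) • (mul_invOf_self (2 : A)) • M.b (i + j + N - 1 - 1)

lemma lie_H_F (t : A) (N : ℤ) (d : ℤ → A) (i n : ℤ) : ⁅M.H t N d i, M.F t N n⁆ =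
    (t ^ 2 * ((i - N - 2 - 2 * n : ℤ) : A) * ⅟2) • M.F t N (i + n + N - 1) := by
  have hLψ := M.lie_L_ψ (i + N - 1) (n + 1)
  have hGb := M.lie_G_b (n + N) (i - 1)
  have hLG := M.lie_L_G (i + N - 1) (n + N)
  have hbψ := (M.commute_b_ψ (i - 1) (n + 1)).lie_eq
  rw [show i + N - 1 + (n + 1) = i + n + N - 1 + 1 by ring] at hLψ
  rw [show n + N + (i - 1) + 1 = i + n + N - 1 + 1 by ring, ← lie_skew] at hGb
  rw [show i + N - 1 + (n + N) = i + n + N - 1 + N by ring] at hLG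
  simp only [H, F, add_lie, lie_add, smul_lie, lie_smul, one_lie, hbψ]
  push_cast at hLψ hGb hLG ⊢
  linear_combination (norm := module) t ^ 3 • hLψ - t ^ 3 • hGb + t ^ 4 • hLG

lemma anticomm_F_F (t : A) {N : ℤ} (hN : -1 ≤ N) (d : ℤ → A) {n m : ℤ} (hn : 0 ≤ n) (hm : 0 ≤ m) :
    anticomm (M.F t N n) (M.F t N m) = (2 * t ^ 2) • M.H t N d (n + m + N + 2) := by
  have hψψ := M.anticomm_ψ_ψ (n + 1) (m + 1)
  have hGψ := M.anticomm_G_ψ (n + N) (m + 1)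
  have hψG := M.anticomm_G_ψ (m + N) (n + 1)
  have hGG := M.anticomm_G_G_of_neg_one_le (show -1 ≤ n + N by lia) (show -1 ≤ m + N by lia)
  rw [if_neg (by lia)] at hψψ
  rw [show n + N + (m + 1) = n + m + N + 2 - 1 by ring] at hGψ
  rw [show m + N + (n + 1) = n + m + N + 2 - 1 by ring, anticomm_comm] at hψG
  rw [show n + N + (m + N) + 1 = n + m + N + 2 + N - 1 by ring] at hGG
  simp only [H, F, add_anticomm, anticomm_add, smul_anticomm, anticomm_smul]
  rw [if_neg (show ¬n + m + N + 2 ≤ N + 1 by lia)]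
  linear_combination (norm := module) t ^ 2 • hψψ + t ^ 3 • hGψ + t ^ 3 • hψG + t ^ 4 • hGG

end TwistedModes

section WeylAndCliffordRelations

variable {A : Type*} [CommRing A] {σ : Type*}

lemma commute_pderiv_pderiv (a b : σ) :
    Commute ((MvPolynomial.pderiv a).toLinearMap : Module.End A (MvPolynomial σ A))
      (MvPolynomial.pderiv b).toLinearMap := by
  classical
  have bracket : ⁅(MvPolynomial.pderiv a : Derivation A (MvPolynomial σ A) (MvPolynomial σ A)),
      MvPolynomial.pderiv b⁆ = 0 :=
    MvPolynomial.derivation_ext fun c => by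
      rw [Derivation.commutator_apply]
      simp [MvPolynomial.pderiv_X, Pi.single_apply, apply_ite]
  exact sub_eq_zero.1 <| Derivation.commutator_coe_linear_map.symm.trans <|
    congrArg Derivation.toLinearMap bracket

lemma lie_pderiv_mulLeft_X [DecidableEq σ] (a b : σ) :
    ⁅((MvPolynomial.pderiv a).toLinearMap : Module.End A (MvPolynomial σ A)),
      LinearMap.mulLeft A (MvPolynomial.X b : MvPolynomial σ A)⁆ = if a = b then 1 else 0 := by
  refine LinearMap.ext fun p => ?_
  rw [Ring.lie_def]
  split_ifs with h <;> simp [Derivation.leibniz, MvPolynomial.pderiv_X, eq_comm, h]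

variable {W : Type*} [AddCommGroup W] [Module A W] {Q : QuadraticForm A W}

lemma anticomm_contractLeft_contractLeft (d d' : Module.Dual A W) :
    anticomm (CliffordAlgebra.contractLeft (Q := Q) d) (CliffordAlgebra.contractLeft d') = 0 :=
  LinearMap.ext fun ω => by
    rw [anticomm]
    exact eq_neg_iff_add_eq_zero.1 (CliffordAlgebra.contractLeft_comm ..)

lemma anticomm_contractLeft_mulLeft_ι (d : Module.Dual A W) (w : W) :
    anticomm (CliffordAlgebra.contractLeft (Q := Q) d)
      (LinearMap.mulLeft A (CliffordAlgebra.ι Q w)) = d w • 1 :=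
  LinearMap.ext fun ω => by
    rw [anticomm]
    exact add_eq_of_eq_sub (CliffordAlgebra.contractLeft_ι_mul ..)

lemma anticomm_mulLeft_ι_mulLeft_ι (w w' : W) :
    anticomm (LinearMap.mulLeft A (ExteriorAlgebra.ι A w))
      (LinearMap.mulLeft A (ExteriorAlgebra.ι A w')) = 0 := by
  have h := map_anticomm (Algebra.lmul A _) (ExteriorAlgebra.ι A w) (ExteriorAlgebra.ι A w')
  rw [anticomm, ExteriorAlgebra.ι_add_mul_swap, map_zero] at h
  exact h.symm

end WeylAndCliffordRelations

/-- The Fock space `A[x^a | a ∈ σ] ⊗ Λ_A(θ^i | i ∈ ι)` with bosonic variables indexed by `σ` and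
fermionic variables indexed by `ι`. -/
def FockSpace (A σ ι : Type*) [CommRing A] :=
  MvPolynomial σ A ⊗[A] ExteriorAlgebra A (ι →₀ A)

namespace FockSpace

variable {A σ ι : Type*} [CommRing A]

instance : AddCommGroup (FockSpace A σ ι) :=
  inferInstanceAs (AddCommGroup (MvPolynomial σ A ⊗[A] ExteriorAlgebra A (ι →₀ A)))

instance : Module A (FockSpace A σ ι) :=
  inferInstanceAs (Module A (MvPolynomial σ A ⊗[A] ExteriorAlgebra A (ι →₀ A)))

/-- An operator on polynomials, acting on the Fock space through the bosonic factor. -/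
def onEven : Module.End A (MvPolynomial σ A) →ₐ[A] Module.End A (FockSpace A σ ι) :=
  Module.End.rTensorAlgHom A _ _

/-- An operator on the exterior algebra, acting on the Fock space through the fermionic factor. No
Koszul signs occur, since polynomials are even. -/
def onOdd : Module.End A (ExteriorAlgebra A (ι →₀ A)) →ₐ[A] Module.End A (FockSpace A σ ι) :=
  Module.End.lTensorAlgHom A _ _

lemma commute_onEven_onOdd (f : Module.End A (MvPolynomial σ A))
    (g : Module.End A (ExteriorAlgebra A (ι →₀ A))) :
    Commute (onEven f : Module.End A (FockSpace A σ ι)) (onOdd g) :=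
  (LinearMap.rTensor_comp_lTensor _ f g).trans (LinearMap.lTensor_comp_rTensor ..).symm

/-- The operator `∂/∂x^a`. -/
def partialX (a : σ) : Module.End A (FockSpace A σ ι) :=
  onEven (MvPolynomial.pderiv a).toLinearMap

/-- Multiplication by `x^a`. -/
def mulX (a : σ) : Module.End A (FockSpace A σ ι) :=
  onEven (LinearMap.mulLeft A (MvPolynomial.X a))

/-- The odd derivation `∂/∂θ^i`. -/
def partialθ (i : ι) : Module.End A (FockSpace A σ ι) :=
  onOdd (CliffordAlgebra.contractLeft (Finsupp.lapply i))

/-- Left multiplication by `θ^i`. -/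
def mulθ (i : ι) : Module.End A (FockSpace A σ ι) :=
  onOdd (LinearMap.mulLeft A (ExteriorAlgebra.ι A (Finsupp.single i 1)))

lemma lie_partialX_partialX (a b : σ) :
    ⁅(partialX a : Module.End A (FockSpace A σ ι)),
      (partialX b : Module.End A (FockSpace A σ ι))⁆ = 0 :=
  Commute.lie_eq ((commute_pderiv_pderiv a b).map onEven)

lemma lie_mulX_mulX (a b : σ) :
    ⁅(mulX a : Module.End A (FockSpace A σ ι)), (mulX b : Module.End A (FockSpace A σ ι))⁆ = 0 :=
  Commute.lie_eq <| ((Commute.all (MvPolynomial.X a : MvPolynomial σ A) (MvPolynomial.X b)).map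
    (Algebra.lmul A _)).map onEven

lemma lie_partialX_mulX [DecidableEq σ] (a b : σ) :
    ⁅(partialX a : Module.End A (FockSpace A σ ι)), (mulX b : Module.End A (FockSpace A σ ι))⁆ =
      if a = b then 1 else 0 := by
  rw [partialX, mulX, ← map_ring_lie, lie_pderiv_mulLeft_X, apply_ite onEven, map_one, map_zero]

lemma anticomm_partialθ_partialθ (i j : ι) :
    anticomm (partialθ i : Module.End A (FockSpace A σ ι)) (partialθ j) = 0 := by
  rw [partialθ, partialθ, ← map_anticomm, anticomm_contractLeft_contractLeft, map_zero]

lemma anticomm_mulθ_mulθ (i j : ι) :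
    anticomm (mulθ i : Module.End A (FockSpace A σ ι)) (mulθ j) = 0 := by
  rw [mulθ, mulθ, ← map_anticomm, anticomm_mulLeft_ι_mulLeft_ι, map_zero]

lemma anticomm_partialθ_mulθ [DecidableEq ι] (i j : ι) :
    anticomm (partialθ i : Module.End A (FockSpace A σ ι)) (mulθ j) = if i = j then 1 else 0 := by
  rw [partialθ, mulθ, ← map_anticomm, anticomm_contractLeft_mulLeft_ι, map_smul, map_one,
    Finsupp.lapply_apply, Finsupp.single_apply, ite_smul, one_smul, zero_smul]
  exact if_congr eq_comm rfl rfl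

lemma partialX_eventually_eq_zero (v : FockSpace A σ ι) :
    ∀ᶠ a in cofinite, (partialX a : Module.End A (FockSpace A σ ι)) v = 0 := by
  induction v using TensorProduct.induction_on with
  | zero => exact .of_forall fun a => map_zero _
  | tmul p ω =>
    filter_upwards [p.vars.eventually_cofinite_notMem] with a ha
    exact (congrArg (· ⊗ₜ ω) (MvPolynomial.pderiv_eq_zero_of_notMem_vars ha)).trans (zero_tmul ..)
  | add v w hv hw =>
    filter_upwards [hv, hw] with a hv hw
    exact (map_add (partialX a) v w).trans ((congrArg₂ (· + ·) hv hw).trans (add_zero 0))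

lemma contractLeft_lapply_eventually_eq_zero (ω : ExteriorAlgebra A (ι →₀ A)) :
    ∀ᶠ i in cofinite, CliffordAlgebra.contractLeft (Finsupp.lapply i) ω = 0 := by
  induction ω using CliffordAlgebra.left_induction with
  | algebraMap r => exact .of_forall fun i => CliffordAlgebra.contractLeft_algebraMap ..
  | add ω ω' hω hω' =>
    filter_upwards [hω, hω'] with i hω hω'
    rw [map_add, hω, hω', add_zero]
  | ι_mul ω f hω =>
    filter_upwards [hω, f.support.eventually_cofinite_notMem] with i hω hf
    rw [CliffordAlgebra.contractLeft_ι_mul, hω, mul_zero, sub_zero, Finsupp.lapply_apply,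
      Finsupp.notMem_support_iff.1 hf, zero_smul]

lemma partialθ_eventually_eq_zero (v : FockSpace A σ ι) :
    ∀ᶠ i in cofinite, (partialθ i : Module.End A (FockSpace A σ ι)) v = 0 := by
  induction v using TensorProduct.induction_on with
  | zero => exact .of_forall fun i => map_zero _
  | tmul p ω =>
    filter_upwards [contractLeft_lapply_eventually_eq_zero ω] with i hi
    exact (congrArg (p ⊗ₜ ·) hi).trans (tmul_zero ..)
  | add v w hv hw =>
    filter_upwards [hv, hw] with i hv hw
    exact (map_add (partialθ i) v w).trans ((congrArg₂ (· + ·) hv hw).trans (add_zero 0))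

/-- The coefficient of `∂/∂θ^{|n|}` in the fermion mode `ψ_n`. -/
def fermionCoeff (t : Aˣ) (c : A) (n : ℤ) : A := if 0 < n then t else if n = 0 then c * t else 0

lemma fermionCoeff_mul_add {t : Aˣ} {c : A} (hc : 2 * c ^ 2 = 1) {n m : ℤ}
    (h : n.natAbs = m.natAbs) :
    fermionCoeff t c n * fermionCoeff t⁻¹ c (-m) + fermionCoeff t⁻¹ c (-n) * fermionCoeff t c m =
      if n + m = 0 then 1 else 0 := by
  rcases eq_or_ne n 0 with rfl | hn
  · obtain rfl : m = 0 := by lia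
    simp only [fermionCoeff, neg_zero, lt_self_iff_false, add_zero, if_false, if_true]
    linear_combination 2 * c ^ 2 * t.mul_inv + hc
  · unfold fermionCoeff
    split_ifs <;> first | lia | simp

/-- The fermion modes on the Fock space: `ψ_n = t ∂/∂θ^n` and `ψ_{-n} = t⁻¹ θ^n` for `0 < n`, and
`ψ_0 = c (t⁻¹ θ^0 + t ∂/∂θ^0)`. -/
def fermionMode (t : Aˣ) (c : A) (n : ℤ) : Module.End A (FockSpace A σ ℕ) :=
  fermionCoeff t c n • partialθ n.natAbs + fermionCoeff t⁻¹ c (-n) • mulθ n.natAbs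

lemma fermionMode_of_pos (t : Aˣ) (c : A) {n : ℤ} (hn : 0 < n) :
    (fermionMode t c n : Module.End A (FockSpace A σ ℕ)) = (t : A) • partialθ n.natAbs := by
  rw [fermionMode, fermionCoeff, fermionCoeff, if_pos hn, if_neg (by lia), if_neg (by lia),
    zero_smul, add_zero]

lemma fermionMode_of_neg (t : Aˣ) (c : A) {n : ℤ} (hn : n < 0) :
    (fermionMode t c n : Module.End A (FockSpace A σ ℕ)) = (↑t⁻¹ : A) • mulθ n.natAbs := by
  rw [fermionMode, fermionCoeff, fermionCoeff, if_neg (by lia), if_neg (by lia), if_pos (by lia),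
    zero_smul, zero_add]

lemma fermionMode_zero (t : Aˣ) (c : A) :
    (fermionMode t c 0 : Module.End A (FockSpace A σ ℕ)) =
      (c * t) • partialθ 0 + (c * ↑t⁻¹) • mulθ 0 := rfl

lemma anticomm_fermionMode_fermionMode (t : Aˣ) {c : A} (hc : 2 * c ^ 2 = 1) (n m : ℤ) :
    anticomm (fermionMode t c n : Module.End A (FockSpace A σ ℕ)) (fermionMode t c m) =
      if n + m = 0 then 1 else 0 := by
  simp only [fermionMode, add_anticomm, anticomm_add, smul_anticomm, anticomm_smul,
    anticomm_partialθ_partialθ, anticomm_mulθ_mulθ, anticomm_partialθ_mulθ,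
    anticomm_comm (mulθ n.natAbs) (partialθ m.natAbs)]
  rcases eq_or_ne n.natAbs m.natAbs with h | h
  · have hcoeff := fermionCoeff_mul_add (t := t) hc h
    rw [if_pos h, if_pos h.symm]
    split_ifs at hcoeff ⊢ <;>
      linear_combination (norm := module) hcoeff • (1 : Module.End A (FockSpace A σ ℕ))
  · rw [if_neg h, if_neg h.symm, if_neg (by lia)]
    simp only [smul_zero, add_zero]

lemma fermionMode_eventually_eq_zero (t : Aˣ) (c : A) (v : FockSpace A σ ℕ) :
    ∀ᶠ n in atTop, fermionMode t c n v = 0 := by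
  have h := partialθ_eventually_eq_zero v
  rw [Nat.cofinite_eq_atTop] at h
  rw [← Nat.map_cast_int_atTop, eventually_map]
  filter_upwards [h, eventually_gt_atTop 0] with n hn hpos
  rw [fermionMode_of_pos t c (mod_cast hpos), LinearMap.smul_apply, Int.natAbs_natCast, hn,
    smul_zero]

variable [Invertible (2 : A)]

/-- The boson modes on the Fock space: `b_r = t ∂/∂x^{r + 1/2}` and `b_{-r} = (r/t) x^{r + 1/2}` for
`0 < r`. The argument is `n` for `r = n + 1/2`, so that `Int.negSucc n` stands for `-(n + 1/2)`. -/
def bosonMode (t : Aˣ) : ℤ → Module.End A (FockSpace A ℕ+ ι)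
  | .ofNat n => (t : A) • partialX n.succPNat
  | .negSucc n => (((2 * n + 1 : ℤ) : A) * ⅟2 * ↑t⁻¹) • mulX n.succPNat

lemma lie_bosonMode_bosonMode (t : Aˣ) (n m : ℤ) :
    ⁅(bosonMode t n : Module.End A (FockSpace A ℕ+ ι)),
        (bosonMode t m : Module.End A (FockSpace A ℕ+ ι))⁆ =
      if n + m + 1 = 0 then (((2 * n + 1 : ℤ) : A) * ⅟2) • 1 else 0 := by
  have lie_partialX_smul_mulX (n m : ℕ) :
      ⁅((t : A) • partialX n.succPNat : Module.End A (FockSpace A ℕ+ ι)),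
        ((((2 * m + 1 : ℤ) : A) * ⅟2 * ↑t⁻¹) • mulX m.succPNat :
          Module.End A (FockSpace A ℕ+ ι))⁆ =
        if n = m then (((2 * m + 1 : ℤ) : A) * ⅟2) • 1 else 0 := by
    rw [smul_lie, lie_smul, lie_partialX_mulX, smul_smul, smul_ite, smul_zero, mul_left_comm,
      Units.mul_inv, mul_one]
    exact if_congr Nat.succPNat_inj rfl rfl
  rcases n with n | n <;> rcases m with m | m <;> simp only [bosonMode]
  · rw [smul_lie, lie_smul, lie_partialX_partialX, smul_zero, smul_zero, if_neg (by lia)]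
  · rw [lie_partialX_smul_mulX]
    rcases eq_or_ne n m with rfl | h
    · rw [if_pos rfl, if_pos (by lia), Int.ofNat_eq_natCast]
    · rw [if_neg h, if_neg (by lia)]
  · rw [← lie_skew, lie_partialX_smul_mulX]
    rcases eq_or_ne m n with rfl | h
    · rw [if_pos rfl, if_pos (by lia), Int.negSucc_eq]
      push_cast
      module
    · rw [if_neg h, if_neg (by lia), neg_zero]
  · rw [smul_lie, lie_smul, lie_mulX_mulX, smul_zero, smul_zero, if_neg (by lia)]

lemma commute_bosonMode_fermionMode (t : Aˣ) (c : A) (n m : ℤ) :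
    Commute (bosonMode t n : Module.End A (FockSpace A ℕ+ ℕ)) (fermionMode t c m) := by
  cases n <;> exact (((commute_onEven_onOdd _ _).smul_right _).add_right
    ((commute_onEven_onOdd _ _).smul_right _)).smul_left _

lemma bosonMode_eventually_eq_zero (t : Aˣ) (v : FockSpace A ℕ+ ι) :
    ∀ᶠ n in atTop, bosonMode t n v = 0 := by
  have h := Nat.succPNat_injective.tendsto_cofinite.eventually (partialX_eventually_eq_zero v)
  rw [← Nat.map_cast_int_atTop, eventually_map, ← Nat.cofinite_eq_atTop]
  filter_upwards [h] with n hn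
  exact (congrArg ((t : A) • ·) hn).trans (smul_zero _)

/-- The modes of the `ℤ₂`-twisted boson and of the Ramond fermion on the Fock space. -/
def twistedModes (t : Aˣ) {c : A} (hc : 2 * c ^ 2 = 1) :
    TwistedModes A (FockSpace A ℕ+ ℕ) where
  b := bosonMode t
  ψ := fermionMode t c
  lie_b_b := lie_bosonMode_bosonMode t
  anticomm_ψ_ψ := anticomm_fermionMode_fermionMode t hc
  commute_b_ψ := commute_bosonMode_fermionMode t c
  b_eventually_eq_zero := bosonMode_eventually_eq_zero t
  ψ_eventually_eq_zero := fermionMode_eventually_eq_zero t c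

end FockSpace

section

variable (k : Type) [Field k]

/-- The unit `√ℏ = t` of `R`. -/
def sqrtHbar : (R k)ˣ where
  val := LaurentPolynomial.T 1
  inv := LaurentPolynomial.T (-1)
  val_inv := by rw [← LaurentPolynomial.T_add, add_neg_cancel, LaurentPolynomial.T_zero]
  inv_val := by rw [← LaurentPolynomial.T_add, neg_add_cancel, LaurentPolynomial.T_zero]

lemma sqrtHbar_sq : (sqrtHbar k : R k) ^ 2 = hb k := LaurentPolynomial.T_pow 1 2

instance invertibleTwoLaurent [NeZero (2 : k)] : Invertible (2 : R k) where
  invOf := cs k 2⁻¹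
  invOf_mul_self := by
    rw [← map_ofNat LaurentPolynomial.C, cs, ← map_mul, inv_mul_cancel₀ two_ne_zero, map_one]
  mul_invOf_self := by
    rw [← map_ofNat LaurentPolynomial.C, cs, ← map_mul, mul_inv_cancel₀ two_ne_zero, map_one]

lemma cs_inv_eight [NeZero (2 : k)] : cs k 8⁻¹ = ⅟(2 : R k) ^ 3 := by
  rw [show ⅟(2 : R k) = cs k 2⁻¹ from rfl, cs, cs, ← map_pow]
  norm_num

variable {k} [NeZero (2 : k)]

lemma two_mul_cs_inv_sq {s : k} (hs : s ^ 2 = 2) : 2 * cs k s⁻¹ ^ 2 = 1 := by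
  rw [← map_ofNat LaurentPolynomial.C, cs, ← map_pow, ← map_mul, inv_pow, hs,
    mul_inv_cancel₀ two_ne_zero, map_one]

variable {s : k} (hs : s ^ 2 = 2)

/-- The modes `b_r` and `ψ_n` on `S`. -/
abbrev modes : TwistedModes (R k) (FockSpace (R k) ℕ+ ℕ) :=
  FockSpace.twistedModes (sqrtHbar k) (two_mul_cs_inv_sq hs)

lemma coe_modes_b (n : ℤ) : ⇑((modes hs).b n) = bos k n := by
  rcases n with n | n
  · rw [bos, dif_pos (by lia)]
    rfl
  · rw [bos, dif_neg (by lia), show -2 * Int.negSucc n - 1 = 2 * n + 1 by lia]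
    rfl

lemma coe_modes_ψ (n : ℤ) : ⇑((modes hs).ψ n) = fer k s n := by
  change ⇑(FockSpace.fermionMode (sqrtHbar k) (cs k s⁻¹) n) = _
  rcases lt_trichotomy n 0 with hn | rfl | hn
  · rw [FockSpace.fermionMode_of_neg _ _ hn, fer, if_neg (by lia), if_neg hn.ne,
      show n.natAbs = (-n).toNat by lia]
    rfl
  · rw [FockSpace.fermionMode_zero, fer, if_neg (by lia), if_pos rfl]
    funext v
    rw [smul_add, smul_smul, mul_assoc, hb, ← LaurentPolynomial.T_add, add_comm]
    rfl
  · rw [FockSpace.fermionMode_of_pos _ _ hn, fer, if_pos (by lia),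
      show n.natAbs = n.toNat by lia]
    rfl

lemma coe_normalB (n m : ℤ) : ⇑((modes hs).normalB n m) = nb k n m := by
  unfold TwistedModes.normalB nb
  split_ifs <;> simp only [← coe_modes_b hs] <;> rfl

lemma coe_normalΨ (n m : ℤ) : ⇑((modes hs).normalΨ n m) = nf k s n m := by
  unfold TwistedModes.normalΨ nf
  split_ifs <;> simp only [← coe_modes_ψ hs] <;> rfl

lemma coe_LB (m : ℤ) : ⇑((modes hs).LB m) = fun v => ∑ᶠ n, nb k n (m - 1 - n) v := by
  simp only [← coe_normalB hs]
  exact funext fun v => (((modes hs).hasPointwiseSum_LB m).2 v).symm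

lemma coe_LF (m : ℤ) : ⇑((modes hs).LF m) =
    fun v => ∑ᶠ j : ℤ, (((2 * j + m : ℤ) : R k) * cs k 2⁻¹) • nf k s (-j) (m + j) v := by
  simp only [← coe_normalΨ hs]
  have reindexed : HasPointwiseSum
      (fun j => (((2 * j + m : ℤ) : R k) * ⅟2) • (modes hs).normalΨ (-j) (m + j))
      ((modes hs).LF m) := by
    convert ((modes hs).hasPointwiseSum_LF m).comp_equiv (Equiv.neg ℤ) using 4 with j
    · rw [Equiv.neg_apply, show m - 2 * -j = 2 * j + m by ring]
    · rfl
    · rw [Equiv.neg_apply, sub_neg_eq_add]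
  exact funext fun v => (reindexed.2 v).symm

lemma coe_G (a : ℤ) : ⇑((modes hs).G a) = fun v => ∑ᶠ n, bos k n (fer k s (a - n) v) := by
  simp only [← coe_modes_b hs, ← coe_modes_ψ hs]
  exact funext fun v => (((modes hs).hasPointwiseSum_G a).2 v).symm

lemma coe_H {N i : ℤ} (D : ℤ → k) (hi : 1 ≤ i) :
    ⇑((modes hs).H (sqrtHbar k) N (fun j => cs k (D j)) i) = Hop k s N D i := by
  refine funext fun v : SuperSpace k => ?_
  have linear : hb k • dXi k i v = (sqrtHbar k : R k) • bos k (i - 1) v := by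
    simp only [dXi, bos, dif_pos hi, dif_pos (sub_nonneg.2 hi), sub_add_cancel, smul_smul,
      ← sqrtHbar_sq, pow_two]
    rfl
  have bosons : ∑ᶠ n : ℤ, nb k n (i + N - 2 - n) v = (modes hs).LB (i + N - 1) v := by
    rw [coe_LB, show i + N - 2 = i + N - 1 - 1 by ring]
  have fermions : ∑ᶠ j : ℤ, (((2 * j + i + N - 1 : ℤ) : R k) * cs k 2⁻¹) •
      nf k s (-j) (i + N - 1 + j) v = (modes hs).LF (i + N - 1) v := by
    rw [coe_LF]
    refine finsum_congr fun j => ?_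
    rw [show 2 * j + i + N - 1 = 2 * j + (i + N - 1) by ring]
  have constant : (if i = 1 - N then (cs k 8⁻¹ * hb k) • v else 0) =
      (hb k * if i + N - 1 = 0 then ⅟2 ^ 3 else 0) • v := by
    rw [mul_ite, mul_zero, ite_smul, zero_smul, cs_inv_eight, mul_comm]
    exact if_congr (by lia) rfl rfl
  have scalar : (if i ≤ N + 1 then (hb k * cs k (D i)) • v else 0) =
      (if i ≤ N + 1 then hb k * cs k (D i) else 0) • v := by
    rw [ite_smul, zero_smul]
  have expand (w : FockSpace (R k) ℕ+ ℕ) :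
      (modes hs).H (sqrtHbar k) N (fun j => cs k (D j)) i w =
        (sqrtHbar k : R k) • (modes hs).b (i - 1) w +
          (⅟2 * hb k) • (modes hs).LB (i + N - 1) w + (⅟2 * hb k) • (modes hs).LF (i + N - 1) w +
          (hb k * if i + N - 1 = 0 then ⅟2 ^ 3 else 0) • w +
          (if i ≤ N + 1 then hb k * cs k (D i) else 0) • w := by
    simp only [TwistedModes.H, TwistedModes.L, LinearMap.add_apply, LinearMap.smul_apply,
      Module.End.one_apply, sqrtHbar_sq]
    module
  unfold Hop
  rw [linear, bosons, fermions, constant, scalar, ← coe_modes_b hs]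
  exact expand v

lemma coe_F {N n : ℤ} (hn : 0 ≤ n) : ⇑((modes hs).F (sqrtHbar k) N n) = Fop k s N n := by
  refine funext fun v : SuperSpace k => ?_
  have linear : hb k • dTi k (n + 1) v = (sqrtHbar k : R k) • fer k s (n + 1) v := by
    simp only [dTi, fer, if_pos (show 1 ≤ n + 1 by lia), smul_smul, ← sqrtHbar_sq, pow_two]
    rfl
  unfold Fop
  rw [linear, ← coe_modes_ψ hs, ← sqrtHbar_sq, ← congrFun (coe_G hs (n + N)) v]
  rfl

end

theorem statement10_general {k : Type} [Field k] [NeZero (2 : k)] {s : k} (hs : s ^ 2 = 2)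
    {N : ℤ} (hN : -1 ≤ N) (D : ℤ → k) :
    (∀ i j : ℤ, 1 ≤ i → 1 ≤ j → ∀ v : SuperSpace k,
      Hop k s N D i (Hop k s N D j v) - Hop k s N D j (Hop k s N D i v)
        = (hb k * ((i - j : ℤ) : R k)) • Hop k s N D (i + j + N - 1) v) ∧
    (∀ i n : ℤ, 1 ≤ i → 0 ≤ n → ∀ v : SuperSpace k,
      Hop k s N D i (Fop k s N n v) - Fop k s N n (Hop k s N D i v)
        = (hb k * ((i - N - 2 - 2 * n : ℤ) : R k) * cs k (2 : k)⁻¹) •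
            Fop k s N (i + n + N - 1) v) ∧
    (∀ n m : ℤ, 0 ≤ n → 0 ≤ m → ∀ v : SuperSpace k,
      Fop k s N n (Fop k s N m v) + Fop k s N m (Fop k s N n v)
        = (2 * hb k) • Hop k s N D (n + m + N + 2) v) := by
  refine ⟨fun i j hi hj v => ?_, fun i n hi hn v => ?_, fun n m hn hm v => ?_⟩
  · rcases eq_or_ne i j with rfl | hij
    · rw [sub_self, sub_self, Int.cast_zero, mul_zero, zero_smul]
    rw [← coe_H hs D hi, ← coe_H hs D hj, ← coe_H hs D (by lia), ← sqrtHbar_sq]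
    exact DFunLike.congr_fun ((modes hs).lie_H_H (sqrtHbar k) hN (fun j => cs k (D j)) hi hj) v
  · have relation := (modes hs).lie_H_F (sqrtHbar k) N (fun j => cs k (D j)) i n
    rw [sqrtHbar_sq] at relation
    rw [← coe_H hs D hi, ← coe_F hs hn]
    by_cases in_range : 0 ≤ i + n + N - 1
    · rw [← coe_F hs in_range]
      exact DFunLike.congr_fun relation v
    · have coeff : i - N - 2 - 2 * n = 0 := by lia
      rw [coeff, Int.cast_zero, mul_zero, zero_mul, zero_smul] at relation ⊢
      exact DFunLike.congr_fun relation v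
  · rw [← coe_F hs hn, ← coe_F hs hm, ← coe_H hs D (by lia), ← sqrtHbar_sq]
    exact DFunLike.congr_fun
      ((modes hs).anticomm_F_F (sqrtHbar k) hN (fun j => cs k (D j)) hn hm) v

/-- For `N ≥ −1` and scalars `D_1, …, D_{N+1}`, the operators `H_i`
(`i ∈ ℤ_{≥1}`) and `F_r` (`r = n + 1/2 ∈ ℤ_{≥0} + 1/2`) satisfy the Neveu–Schwarz super
Virasoro relations `[H_i, H_j] = ℏ(i−j) H_{i+j+N−1}`,
`[H_i, F_r] = ℏ((i−N−1)/2 − r) F_{i+r+N−1}` and `{F_r, F_s} = 2ℏ H_{r+s+N+1}`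
(out-of-range right-hand subscripts in the middle relation only occur with vanishing
scalar coefficient); a super quantum Airy structure with one extra fermionic
variable `θ⁰`. -/
theorem statement10 (hs2 : s2 ^ 2 = 2) (N : ℤ) (hN : -1 ≤ N) (D : ℤ → K) :
    (∀ i j : ℤ, 1 ≤ i → 1 ≤ j → ∀ v : SuperSpace K,
      Hop K s2 N D i (Hop K s2 N D j v) - Hop K s2 N D j (Hop K s2 N D i v)
        = (hb K * ((i - j : ℤ) : R K)) • Hop K s2 N D (i + j + N - 1) v) ∧
    (∀ i n : ℤ, 1 ≤ i → 0 ≤ n → ∀ v : SuperSpace K,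
      Hop K s2 N D i (Fop K s2 N n v) - Fop K s2 N n (Hop K s2 N D i v)
        = (hb K * ((i - N - 2 - 2 * n : ℤ) : R K) * cs K (2 : K)⁻¹) •
            Fop K s2 N (i + n + N - 1) v) ∧
    (∀ n m : ℤ, 0 ≤ n → 0 ≤ m → ∀ v : SuperSpace K,
      Fop K s2 N n (Fop K s2 N m v) + Fop K s2 N m (Fop K s2 N n v)
        = (2 * hb K) • Hop K s2 N D (n + m + N + 2) v) := by
  exact statement10_general hs2 hN D

end
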